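/- arXiv:math/0703206 — 3 statements merged into one kernel-verified Lean document; each statement's English description precedes it below -/
import Mathlib

section
/- Let X ⊆ Σ^{ℤ^d} be a nonempty irreducible shift of finite type. Then the set of finite patterns that are globally admissible for X is decidable: there is a computable function which, given (an effective encoding of) a finite set E ⊆ ℤ^d and a pattern a : E → Σ, decides whether a is globally admissible for X. -/
open Filter Topology

/-- `X` is a shift of finite type: it is cut out by a finite shape `F` and a syntax `L ⊆ Σ^F`. -/
def IsSFT {A : Type} {d : ℕ} (X : Set ((Fin d → ℤ) → A)) : Prop :=
  ∃ (F : Finset (Fin d → ℤ)) (L : Set (F → A)),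
    X = {x | ∀ u : Fin d → ℤ, (fun v : F => x ((v : Fin d → ℤ) + u)) ∈ L}

/-- The pattern `a` (restricted to the set `E`) is globally admissible for `X`:
it is the restriction to `E` of a point of `X`. -/
def GloballyAdmissibleOn {A : Type} {d : ℕ} (X : Set ((Fin d → ℤ) → A))
    (E : Set (Fin d → ℤ)) (a : (Fin d → ℤ) → A) : Prop :=
  ∃ x ∈ X, ∀ v ∈ E, x v = a v

/-- Irreducibility: there is a gap `r > 0` such that any two globally admissible patterns
whose domains are at `ℓ∞`-distance at least `r` can be simultaneously extended
to a point of `X`. -/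
def IrreducibleShift {A : Type} {d : ℕ} (X : Set ((Fin d → ℤ) → A)) : Prop :=
  ∃ r : ℕ, 0 < r ∧
    ∀ (E₁ E₂ : Set (Fin d → ℤ)) (a b : (Fin d → ℤ) → A),
      (∀ u ∈ E₁, ∀ v ∈ E₂, ∃ i : Fin d, (r : ℤ) ≤ |u i - v i|) →
      GloballyAdmissibleOn X E₁ a → GloballyAdmissibleOn X E₂ b →
      ∃ x ∈ X, (∀ v ∈ E₁, x v = a v) ∧ (∀ v ∈ E₂, x v = b v)

/-!
Both admissibility of a finite pattern and its negation are semidecidable.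

If no point of `X` extends the pattern, then by compactness finitely many of the local constraints
defining `X` already exclude it, and whether given constraints do so is a question about finitely
many sites.

If the pattern is admissible, irreducibility provides a finite set `S` such that every point of `X`
can be changed on `S` so as to contain the pattern. By compactness there is a finite set `D` such
that any configuration satisfying the constraints at `D`, whether or not it lies in `X`, can
likewise be changed on `S` so that it contains the pattern and satisfies the constraints at `S`.
For given `S` and `D` this last property is again a question about finitely many sites. It certifies
admissibility: applied to a point of `X`, it yields another point of `X`, since the constraints that
do not meet `S` are unaffected by the change.
-/

section PrimrecClosure

variable {α β γ : Type*} [Primcodable α] [Primcodable β] [Primcodable γ]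

theorem primrecPred_imp {p q : α → Prop} (hp : PrimrecPred p) (hq : PrimrecPred q) :
    PrimrecPred fun a => p a → q a :=
  (hp.not.or hq).of_eq fun _ => imp_iff_not_or.symm

theorem primrecPred_forall_mem {f : α → List β} {R : α → β → Prop} (hf : Primrec f)
    (hR : PrimrecRel R) : PrimrecPred fun a => ∀ b ∈ f a, R a b :=
  hR.swap.forall_mem_list.comp hf Primrec.id

theorem primrecRel_mem_list : PrimrecRel fun (b : β) (l : List β) => b ∈ l :=
  (Primrec.eq.exists_mem_list.swap).of_eq fun _ _ => by simp

theorem primrec_list_map_of_forall {δ : Type*} {h : α → δ → β} (l : List δ)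
    (hh : ∀ c, Primrec fun a => h a c) : Primrec fun a => l.map (h a) := by
  induction l with
  | nil => exact Primrec.const []
  | cons c l ih => exact Primrec.list_cons.comp (hh c) ih

theorem primrec_list_sections : Primrec (List.sections : List (List β) → List (List β)) := by
  have hstep : Primrec₂ fun (_ : List (List β)) (p : List β × List (List β)) =>
      p.2.flatMap fun s => p.1.map fun b => b :: s := by
    refine Primrec.list_flatMap (Primrec.snd.comp Primrec.snd) ?_
    refine Primrec.list_map (Primrec.fst.comp (Primrec.snd.comp Primrec.fst)) ?_
    exact Primrec.list_cons.comp Primrec.snd (Primrec.snd.comp Primrec.fst)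
  refine (Primrec.list_foldr Primrec.id (Primrec.const [[]]) hstep).of_eq fun L => ?_
  induction L with
  | nil => rfl
  | cons l L ih => simp only [id_eq, List.foldr_cons, List.sections] at ih ⊢; rw [ih]

theorem rePred_exists {R : α → β → Prop} (hR : PrimrecRel R) : REPred fun a => ∃ b, R a b := by
  classical
  have hguard : Primrec₂ fun (a : α) (n : ℕ) =>
      (Encodable.decode (α := β) n).bind fun b => if R a b then some b else none :=
    Primrec.option_bind (Primrec.decode.comp Primrec.snd)
      (Primrec.ite (hR.comp (Primrec.fst.comp Primrec.fst) Primrec.snd)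
        (Primrec.option_some.comp Primrec.snd) (Primrec.const none))
  refine (Partrec.rfindOpt hguard.to_comp).dom_re.of_eq fun a => ?_
  rw [Nat.rfindOpt_dom]
  constructor
  · rintro ⟨n, b, h⟩
    simp only [Option.mem_def, Option.bind_eq_some_iff, Option.ite_none_right_eq_some] at h
    obtain ⟨c, -, hc, -⟩ := h
    exact ⟨c, hc⟩
  · rintro ⟨b, hb⟩
    exact ⟨Encodable.encode b, b, by simp [hb]⟩

end PrimrecClosure

section IntAddition

variable {α β : Type*} [Primcodable α] [Primcodable β]

theorem primrec_int_ofNat : Primrec Int.ofNat :=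
  Primrec.encode_iff.1 (Primrec.nat_double.of_eq fun _ => rfl)

theorem primrec_int_negSucc : Primrec Int.negSucc :=
  Primrec.encode_iff.1 (Primrec.nat_double_succ.of_eq fun _ => rfl)

theorem primrec_int_casesOn {f : α → ℤ} {g h : α → ℕ → β} (hf : Primrec f) (hg : Primrec₂ g)
    (hh : Primrec₂ h) :
    Primrec fun a => (Int.casesOn (f a) (g a) (h a) : β) := by
  -- `ofNat n` and `negSucc n` have the codes `2 * n` and `2 * n + 1`.
  have hcode : Primrec fun a => Encodable.encode (f a) := Primrec.encode.comp hf
  have hhalf : Primrec fun a => Encodable.encode (f a) / 2 :=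
    Primrec.nat_div.comp hcode (Primrec.const 2)
  have heven : PrimrecPred fun a => Encodable.encode (f a) % 2 = 0 :=
    Primrec.eq.comp (Primrec.nat_mod.comp hcode (Primrec.const 2)) (Primrec.const 0)
  refine (Primrec.ite heven (hg.comp Primrec.id hhalf) (hh.comp Primrec.id hhalf)).of_eq
    fun a => ?_
  rcases f a with n | n
  · have hn : Encodable.encode (Int.ofNat n) = 2 * n := rfl
    rw [if_pos (by omega), show Encodable.encode (Int.ofNat n) / 2 = n by omega]
    rfl
  · have hn : Encodable.encode (Int.negSucc n) = 2 * n + 1 := rfl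
    rw [if_neg (by omega), show Encodable.encode (Int.negSucc n) / 2 = n by omega]
    rfl

theorem primrec₂_int_subNatNat : Primrec₂ Int.subNatNat := by
  have hcases : Primrec₂ fun m n : ℕ =>
      (Nat.casesOn (n - m) (Int.ofNat (m - n)) Int.negSucc : ℤ) :=
    Primrec.nat_casesOn (Primrec.nat_sub.comp Primrec.snd Primrec.fst)
      (primrec_int_ofNat.comp Primrec.nat_sub) (primrec_int_negSucc.comp Primrec.snd)
  exact hcases.of_eq fun m n => by unfold Int.subNatNat; cases n - m <;> rfl

theorem primrec₂_int_add : Primrec₂ ((· + ·) : ℤ → ℤ → ℤ) := by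
  have hsum : Primrec₂ fun (p : (ℤ × ℤ) × ℕ) (n : ℕ) => p.2 + n :=
    Primrec.nat_add.comp (Primrec.snd.comp Primrec.fst) Primrec.snd
  have hleft : Primrec₂ fun (p : (ℤ × ℤ) × ℕ) (n : ℕ) => Int.subNatNat p.2 (n + 1) :=
    primrec₂_int_subNatNat.comp (Primrec.snd.comp Primrec.fst) (Primrec.succ.comp Primrec.snd)
  have hright : Primrec₂ fun (p : (ℤ × ℤ) × ℕ) (n : ℕ) => Int.subNatNat n (p.2 + 1) :=
    primrec₂_int_subNatNat.comp Primrec.snd (Primrec.succ.comp (Primrec.snd.comp Primrec.fst))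
  have hsecond : Primrec fun p : (ℤ × ℤ) × ℕ => p.1.2 := Primrec.snd.comp Primrec.fst
  have hcases := primrec_int_casesOn (Primrec.fst : Primrec (Prod.fst : ℤ × ℤ → ℤ))
    (primrec_int_casesOn hsecond (primrec_int_ofNat.comp₂ hsum) hleft).to₂
    (primrec_int_casesOn hsecond hright
      (primrec_int_negSucc.comp₂ (Primrec.succ.comp₂ hsum))).to₂
  refine hcases.of_eq fun ⟨a, b⟩ => ?_
  cases a <;> cases b <;> rfl

theorem primrec₂_fin_pi_add {M : Type*} [Add M] [Primcodable M] {n : ℕ}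
    (hM : Primrec₂ ((· + ·) : M → M → M)) :
    Primrec₂ ((· + ·) : (Fin n → M) → (Fin n → M) → Fin n → M) := by
  refine Primrec.fin_curry.2 (hM.comp ?_ ?_)
  · exact Primrec.fin_app.comp (Primrec.fst.comp Primrec.fst) Primrec.snd
  · exact Primrec.fin_app.comp (Primrec.snd.comp Primrec.fst) Primrec.snd

end IntAddition

section Compactness

variable {V A ι : Type*}

theorem isClopen_setOf_of_dependsOn [TopologicalSpace A] [DiscreteTopology A] {s : Set V}
    (hs : s.Finite) {P : (V → A) → Prop} (hP : DependsOn P s) : IsClopen {x | P x} := by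
  have := hs.to_subtype
  have hpre : {x | P x} = s.domRestrict (π := fun _ => A) ⁻¹' (s.domRestrict '' {x | P x}) := by
    refine (Set.subset_preimage_image _ _).antisymm ?_
    rintro x ⟨y, hy, hyx⟩
    exact (hP fun v hv => congrFun hyx ⟨v, hv⟩).mp hy
  rw [hpre]
  exact (isClopen_discrete _).preimage (Pi.continuous_domRestrict s)

theorem exists_finset_forall_imp_of_dependsOn [Finite A] {P : ι → (V → A) → Prop}
    {Q : (V → A) → Prop} (hP : ∀ i, ∃ s : Set V, s.Finite ∧ DependsOn (P i) s)
    (hQ : ∃ s : Set V, s.Finite ∧ DependsOn Q s) (hPQ : ∀ x, (∀ i, P i x) → Q x) :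
    ∃ D : Finset ι, ∀ x, (∀ i ∈ D, P i x) → Q x := by
  let _ : TopologicalSpace A := ⊥
  have : DiscreteTopology A := ⟨rfl⟩
  have hPclosed : ∀ i, IsClosed {x | P i x} := fun i =>
    have ⟨_, hs, hdep⟩ := hP i
    (isClopen_setOf_of_dependsOn hs hdep).isClosed
  obtain ⟨_, hs, hdep⟩ := hQ
  have hcompact : IsCompact {x | Q x}ᶜ :=
    (isClopen_setOf_of_dependsOn hs hdep).compl.isClosed.isCompact
  obtain ⟨D, hD⟩ := hcompact.elim_finite_subfamily_closed (fun i => {x | P i x}) hPclosed <| by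
    rw [Set.eq_empty_iff_forall_notMem]
    rintro x ⟨hx, hPx⟩
    exact hx (hPQ x (Set.mem_iInter.1 hPx))
  refine ⟨D, fun x hx => by_contra fun hQx => ?_⟩
  exact (Set.eq_empty_iff_forall_notMem.1 hD x) ⟨hQx, Set.mem_iInter₂.2 hx⟩

end Compactness

section Patterns

variable {V A : Type*}

/-- The finite pattern whose graph is listed by `l` occurs in `x`, at its prescribed position. -/
def OccursIn (l : List (V × A)) (x : V → A) : Prop :=
  ∀ p ∈ l, x p.1 = p.2

/-- None of the forbidden patterns in `Q` occurs in `x`. -/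
def AvoidedBy (Q : List (List (V × A))) (x : V → A) : Prop :=
  ∀ q ∈ Q, ¬ OccursIn q x

/-- The sites at which some pattern in `Q` prescribes a symbol. -/
def sites (Q : List (List (V × A))) : List V :=
  Q.flatten.map Prod.fst

theorem mem_sites {Q : List (List (V × A))} {q : List (V × A)} {p : V × A} (hq : q ∈ Q)
    (hp : p ∈ q) : p.1 ∈ sites Q :=
  List.mem_map_of_mem (List.mem_flatten_of_mem hq hp)

theorem sites_mono {Q Q' : List (List (V × A))} (h : Q ⊆ Q') : sites Q ⊆ sites Q' := by
  intro v hv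
  obtain ⟨p, hp, rfl⟩ := List.mem_map.1 hv
  obtain ⟨q, hq, hpq⟩ := List.mem_flatten.1 hp
  exact mem_sites (h hq) hpq

theorem dependsOn_occursIn (l : List (V × A)) :
    DependsOn (OccursIn l) {v | v ∈ l.map Prod.fst} := fun _ _ hxy =>
  propext <| forall₂_congr fun _ hp => by rw [hxy _ (List.mem_map_of_mem hp)]

theorem dependsOn_occursIn_of_mem {Q : List (List (V × A))} {l : List (V × A)} (hl : l ∈ Q) :
    DependsOn (OccursIn l) {v | v ∈ sites Q} :=
  (dependsOn_occursIn l).mono fun _ hv =>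
    have ⟨_, hp, hpv⟩ := List.mem_map.1 hv
    hpv ▸ mem_sites hl hp

theorem dependsOn_avoidedBy (Q : List (List (V × A))) :
    DependsOn (AvoidedBy Q) {v | v ∈ sites Q} := fun _ _ hxy =>
  propext <| forall₂_congr fun _ hq => by rw [dependsOn_occursIn_of_mem hq hxy]

open Classical in
/-- The configuration equal to `y` on `S` and to `x` off `S`. -/
noncomputable def splice (S : List V) (y x : V → A) : V → A :=
  fun v => if v ∈ S then y v else x v

theorem splice_of_mem {S : List V} {v : V} (hv : v ∈ S) (y x : V → A) : splice S y x v = y v :=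
  if_pos hv

theorem splice_of_notMem {S : List V} {v : V} (hv : v ∉ S) (y x : V → A) :
    splice S y x v = x v :=
  if_neg hv

theorem splice_congr_left {S : List V} {y y' : V → A} (h : ∀ v ∈ S, y v = y' v) (x : V → A) :
    splice S y x = splice S y' x :=
  funext fun v => by unfold splice; split <;> simp_all only

theorem splice_apply_congr_right {x x' : V → A} {v : V} (h : x v = x' v) (S : List V)
    (y : V → A) : splice S y x v = splice S y x' v := by
  simp only [splice, h]

end Patterns

section Certificates

variable {V A : Type*} (C : V → List (List (V × A)))

/-- The configurations satisfying the constraint system `C`, where `C v` lists the patterns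
forbidden at the site `v`. Shifts of finite type are of this form. -/
def solutions : Set (V → A) :=
  {x | ∀ v, AvoidedBy (C v) x}

/-- The constraint system `C` lists every forbidden pattern at each site of its domain, so that
`C v` contains all the constraints that can be broken by changing a configuration at `v`. -/
def IsSaturated : Prop :=
  ∀ u, ∀ q ∈ C u, ∀ p ∈ q, q ∈ C p.1

/-- Every admissible finite pattern can be written into every point of `X` at the cost of changing
that point on a finite set which depends on the pattern only. Irreducible subshifts have this
property. -/
def HasFiniteGluing (X : Set (V → A)) : Prop :=
  ∀ l : List (V × A), (∃ x ∈ X, OccursIn l x) →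
    ∃ S : Finset V, ∀ z ∈ X, ∃ x ∈ X, OccursIn l x ∧ ∀ v ∉ S, x v = z v

/-- `D` certifies that `l` is not admissible: satisfying the constraints at the sites of `D` is
already incompatible with extending `l`. -/
def IsRefutation (l : List (V × A)) (D : List V) : Prop :=
  ∀ x, AvoidedBy (D.flatMap C) x → ¬ OccursIn l x

/-- `(S, D)` certifies that `l` is admissible: every configuration satisfying the constraints at
the sites of `D` can be changed on `S` so as to extend `l` and satisfy the constraints at the sites
of `S`. -/
def IsRepair (l : List (V × A)) (S D : List V) : Prop :=
  ∀ x, AvoidedBy (D.flatMap C) x →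
    ∃ y, AvoidedBy (S.flatMap C) (splice S y x) ∧ OccursIn l (splice S y x)

variable {C}

theorem avoidedBy_flatMap {x : V → A} {D : List V} :
    AvoidedBy (D.flatMap C) x ↔ ∀ v ∈ D, AvoidedBy (C v) x := by
  simp only [AvoidedBy, List.mem_flatMap, forall_exists_index, and_imp]
  exact ⟨fun h v hv q hq => h q v hv hq, fun h q v hv hq => h v hv q hq⟩

theorem avoidedBy_flatMap_of_mem_solutions {x : V → A} (hx : x ∈ solutions C) (D : List V) :
    AvoidedBy (D.flatMap C) x :=
  avoidedBy_flatMap.2 fun v _ => hx v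

theorem exists_list_forall_avoidedBy_imp [Finite A] {Q : (V → A) → Prop}
    {T : List V} (hQ : DependsOn Q {v | v ∈ T}) (h : ∀ x ∈ solutions C, Q x) :
    ∃ D : List V, ∀ x, AvoidedBy (D.flatMap C) x → Q x := by
  obtain ⟨D, hD⟩ := exists_finset_forall_imp_of_dependsOn
    (fun v => ⟨_, List.finite_toSet _, dependsOn_avoidedBy (C v)⟩) ⟨_, List.finite_toSet T, hQ⟩ h
  exact ⟨D.toList, fun x hx => hD x fun v hv => avoidedBy_flatMap.1 hx v (Finset.mem_toList.2 hv)⟩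

theorem exists_isRefutation_iff [Finite A] (l : List (V × A)) :
    (∃ D, IsRefutation C l D) ↔ ¬ ∃ x ∈ solutions C, OccursIn l x := by
  constructor
  · rintro ⟨D, hD⟩ ⟨x, hx, hxl⟩
    exact hD x (avoidedBy_flatMap_of_mem_solutions hx D) hxl
  · intro hl
    refine exists_list_forall_avoidedBy_imp (T := l.map Prod.fst) (fun x y hxy => ?_)
      fun x hx hxl => hl ⟨x, hx, hxl⟩
    rw [dependsOn_occursIn l hxy]

theorem mem_solutions_of_eq_off {S : List V} {x z : V → A} (hC : IsSaturated C)
    (hz : z ∈ solutions C) (hxz : ∀ v ∉ S, x v = z v) (hxS : AvoidedBy (S.flatMap C) x) :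
    x ∈ solutions C := by
  intro v q hq
  by_cases hmeet : ∃ p ∈ q, p.1 ∈ S
  · obtain ⟨p, hp, hpS⟩ := hmeet
    exact avoidedBy_flatMap.1 hxS p.1 hpS q (hC v q hq p hp)
  · have hoff : ∀ w ∈ q.map Prod.fst, x w = z w := by
      intro w hw
      obtain ⟨p, hp, rfl⟩ := List.mem_map.1 hw
      exact hxz p.1 fun hpS => hmeet ⟨p, hp, hpS⟩
    rw [dependsOn_occursIn q hoff]
    exact hz v q hq

theorem IsRepair.exists_occursIn {l : List (V × A)} {S D : List V} (h : IsRepair C l S D)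
    (hC : IsSaturated C) (hne : (solutions C).Nonempty) : ∃ x ∈ solutions C, OccursIn l x := by
  obtain ⟨z, hz⟩ := hne
  obtain ⟨y, hyS, hyl⟩ := h z (avoidedBy_flatMap_of_mem_solutions hz D)
  exact ⟨splice S y z,
    mem_solutions_of_eq_off hC hz (fun v hv => splice_of_notMem hv y z) hyS, hyl⟩

theorem HasFiniteGluing.exists_isRepair [Finite A] (h : HasFiniteGluing (solutions C))
    {l : List (V × A)} (hl : ∃ x ∈ solutions C, OccursIn l x) : ∃ S D, IsRepair C l S D := by
  obtain ⟨S, hS⟩ := h l hl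
  -- `T` contains all sites that matter for `l` and for the constraints at `S`; by compactness,
  -- satisfying finitely many constraints forces `x` to agree on `T` with a solution `z`.
  let T := sites (l :: S.toList.flatMap C)
  have hlocal : DependsOn (fun x : V → A => ∃ z ∈ solutions C, ∀ v ∈ T, x v = z v)
      {v | v ∈ T} := fun x x' hxx' =>
    propext <| exists_congr fun z => and_congr_right fun _ => forall₂_congr fun v hv => by
      rw [hxx' v hv]
  obtain ⟨D, hD⟩ := exists_list_forall_avoidedBy_imp hlocal fun x hx => ⟨x, hx, fun _ _ => rfl⟩
  refine ⟨S.toList, D, fun x hx => ?_⟩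
  obtain ⟨z, hz, hxz⟩ := hD x hx
  obtain ⟨y, hy, hyl, hyz⟩ := hS z hz
  have hsplice : ∀ v ∈ T, splice S.toList y x v = y v := by
    intro v hv
    by_cases hvS : v ∈ S.toList
    · exact splice_of_mem hvS y x
    · rw [splice_of_notMem hvS, hxz v hv, hyz v (by simpa using hvS)]
  refine ⟨y, ?_, ?_⟩
  · have hconstraints : DependsOn (AvoidedBy (S.toList.flatMap C)) {v | v ∈ T} :=
      (dependsOn_avoidedBy _).mono (sites_mono (List.subset_cons_self _ _))
    rw [hconstraints hsplice]
    exact avoidedBy_flatMap_of_mem_solutions hy _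
  · rw [dependsOn_occursIn_of_mem List.mem_cons_self hsplice]
    exact hyl

theorem exists_isRepair_iff [Finite A] (hC : IsSaturated C) (hne : (solutions C).Nonempty)
    (hglue : HasFiniteGluing (solutions C)) (l : List (V × A)) :
    (∃ P : List V × List V, IsRepair C l P.1 P.2) ↔ ∃ x ∈ solutions C, OccursIn l x :=
  ⟨fun ⟨_, hP⟩ => hP.exists_occursIn hC hne, fun hl =>
    have ⟨S, D, hSD⟩ := hglue.exists_isRepair hl
    ⟨(S, D), hSD⟩⟩

end Certificates

section Computability

variable {α V A : Type*} [Primcodable α] [Primcodable V] [Primcodable A]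
  {C : V → List (List (V × A))}

theorem primrecPred_occursIn {x : α → V → A} {l : α → List (V × A)} (hx : Primrec₂ x)
    (hl : Primrec l) : PrimrecPred fun a => OccursIn (l a) (x a) :=
  primrecPred_forall_mem hl <| Primrec.eq.comp
    (hx.comp Primrec.fst (Primrec.fst.comp Primrec.snd)) (Primrec.snd.comp Primrec.snd)

theorem primrecPred_avoidedBy {x : α → V → A} {Q : α → List (List (V × A))} (hx : Primrec₂ x)
    (hQ : Primrec Q) : PrimrecPred fun a => AvoidedBy (Q a) (x a) :=
  have hx' : Primrec₂ fun p : α × List (V × A) => x p.1 :=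
    hx.comp₂ (Primrec.fst.comp₂ Primrec₂.left) Primrec₂.right
  primrecPred_forall_mem hQ (primrecPred_occursIn hx' Primrec.snd).not

theorem primrec₂_splice {S : α → List V} {x y : α → V → A} (hS : Primrec S) (hy : Primrec₂ y)
    (hx : Primrec₂ x) : Primrec₂ fun a => splice (S a) (y a) (x a) := by
  classical
  exact (Primrec.ite (primrecRel_mem_list.comp Primrec.snd (hS.comp Primrec.fst)) hy hx).of_eq
    fun _ => by simp only [splice]

theorem primrec_sites : Primrec (sites : List (List (V × A)) → List V) :=
  Primrec.list_map Primrec.list_flatten (Primrec.fst.comp₂ Primrec₂.right)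

-- Only the restrictions of configurations to `T a` matter, and these can be enumerated.
theorem primrecPred_forall_config [Finite A] [Nonempty A] {T : α → List V}
    {R : α → (V → A) → Prop} (hT : Primrec T) (hdep : ∀ a, DependsOn (R a) {v | v ∈ T a})
    (hR : ∀ x : α × List (V × A) → V → A, Primrec₂ x → PrimrecPred fun p => R p.1 (x p)) :
    PrimrecPred fun a => ∀ x, R a x := by
  classical
  obtain ⟨letters, hletters⟩ := Finite.exists_univ_list A
  let a₀ : A := Classical.arbitrary A
  let graphs (a : α) : List (List (V × A)) :=
    ((T a).map fun v => letters.map fun s => (v, s)).sections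
  let ofGraph (w : List (V × A)) (v : V) : A := (w.lookup v).getD a₀
  have hgraphs : Primrec graphs := primrec_list_sections.comp <|
    Primrec.list_map hT <| Primrec.list_map (Primrec.const letters) <|
      Primrec.pair (Primrec.snd.comp Primrec.fst) Primrec.snd
  have hofGraph : Primrec₂ fun (p : α × List (V × A)) v => ofGraph p.2 v :=
    Primrec.option_getD.comp
      (Primrec.listLookup.comp Primrec.snd (Primrec.snd.comp Primrec.fst)) (Primrec.const a₀)
  refine (primrecPred_forall_mem hgraphs (hR _ hofGraph).primrecRel).of_eq fun a => ?_
  refine ⟨fun h x => ?_, fun h w _ => h (ofGraph w)⟩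
  have hmem : (T a).map (fun v => (v, x v)) ∈ graphs a := by
    simp only [graphs, List.mem_sections, List.forall₂_map_left_iff, List.forall₂_map_right_iff,
      List.forall₂_same]
    exact fun v _ => List.mem_map_of_mem (hletters.2 _)
  have hx : ∀ v ∈ T a, ofGraph ((T a).map fun v => (v, x v)) v = x v := by
    intro v hv
    simp only [ofGraph, List.lookup_graph x hv, Option.getD_some]
  exact (hdep a hx).mp (h _ hmem)

theorem primrecPred_exists_config [Finite A] [Nonempty A] {T : α → List V}
    {R : α → (V → A) → Prop} (hT : Primrec T) (hdep : ∀ a, DependsOn (R a) {v | v ∈ T a})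
    (hR : ∀ x : α × List (V × A) → V → A, Primrec₂ x → PrimrecPred fun p => R p.1 (x p)) :
    PrimrecPred fun a => ∃ x, R a x :=
  (primrecPred_forall_config hT (fun a _ _ h => congrArg Not (hdep a h))
    fun x hx => (hR x hx).not).not.of_eq fun _ => by simp only [not_forall, not_not]

theorem primrecRel_isRefutation [Finite A] [Nonempty A] (hC : Primrec C) :
    PrimrecRel (IsRefutation C) := by
  have hconstraints : Primrec fun p : List (V × A) × List V => p.2.flatMap C :=
    Primrec.list_flatMap Primrec.snd (hC.comp₂ Primrec₂.right)
  have hsites : Primrec fun p : List (V × A) × List V => sites (p.1 :: p.2.flatMap C) :=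
    primrec_sites.comp (Primrec.list_cons.comp Primrec.fst hconstraints)
  refine primrecPred_forall_config hsites (fun p x y hxy => ?_) fun x hx => primrecPred_imp
    (primrecPred_avoidedBy hx (hconstraints.comp Primrec.fst))
    (primrecPred_occursIn hx (Primrec.fst.comp Primrec.fst)).not
  rw [dependsOn_occursIn_of_mem List.mem_cons_self hxy,
    (dependsOn_avoidedBy _).mono (sites_mono (List.subset_cons_self _ _)) hxy]

theorem primrecRel_isRepair [Finite A] [Nonempty A] (hC : Primrec C) :
    PrimrecRel fun (l : List (V × A)) (P : List V × List V) => IsRepair C l P.1 P.2 := by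
  let Input := List (V × A) × List V × List V
  have hS : Primrec fun p : Input => p.2.1 := Primrec.fst.comp Primrec.snd
  have hSC : Primrec fun p : Input => p.2.1.flatMap C :=
    Primrec.list_flatMap hS (hC.comp₂ Primrec₂.right)
  have hDC : Primrec fun p : Input => p.2.2.flatMap C :=
    Primrec.list_flatMap (Primrec.snd.comp Primrec.snd) (hC.comp₂ Primrec₂.right)
  have hsites : Primrec fun p : Input => sites (p.1 :: (p.2.1.flatMap C ++ p.2.2.flatMap C)) :=
    primrec_sites.comp (Primrec.list_cons.comp Primrec.fst (Primrec.list_append.comp hSC hDC))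
  refine primrecPred_forall_config hsites (fun p x x' hxx' => ?_) fun x hx => primrecPred_imp
    (primrecPred_avoidedBy hx (hDC.comp Primrec.fst))
    (primrecPred_exists_config (hS.comp Primrec.fst) (fun p y y' hyy' => ?_) fun y hy => ?_)
  · have hsplice (y : V → A) := fun v hv => splice_apply_congr_right (hxx' v hv) p.2.1 y
    have hS' (y : V → A) := (dependsOn_avoidedBy (p.2.1.flatMap C)).mono
      (sites_mono fun _ h => List.mem_cons_of_mem _ (List.mem_append_left _ h)) (hsplice y)
    have hD' := (dependsOn_avoidedBy (p.2.2.flatMap C)).mono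
      (sites_mono fun _ h => List.mem_cons_of_mem _ (List.mem_append_right _ h)) hxx'
    have hl' (y : V → A) := dependsOn_occursIn_of_mem List.mem_cons_self (hsplice y)
    simp only [hS', hD', hl']
  · rw [splice_congr_left hyy']
  · have hxy := primrec₂_splice (hS.comp (Primrec.fst.comp Primrec.fst)) hy
      (hx.comp₂ (Primrec.fst.comp₂ Primrec₂.left) Primrec₂.right)
    exact (primrecPred_avoidedBy hxy (hSC.comp (Primrec.fst.comp Primrec.fst))).and
      (primrecPred_occursIn hxy (Primrec.fst.comp (Primrec.fst.comp Primrec.fst)))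

theorem computablePred_occursIn_solutions [Finite A] [Nonempty A] (hprim : Primrec C)
    (hsat : IsSaturated C) (hne : (solutions C).Nonempty)
    (hglue : HasFiniteGluing (solutions C)) :
    ComputablePred fun l => ∃ x ∈ solutions C, OccursIn l x := by
  refine ComputablePred.computable_iff_re_compl_re'.2 ⟨?_, ?_⟩
  · exact (rePred_exists (primrecRel_isRepair hprim)).of_eq (exists_isRepair_iff hsat hne hglue)
  · exact (rePred_exists (primrecRel_isRefutation hprim)).of_eq exists_isRefutation_iff

end Computability

section ShiftOfFiniteType

variable {G A : Type*}

/-- The graph of the pattern `q` on the shape `F`, translated by `u`. -/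
noncomputable def window [Add G] {F : Finset G} (q : F → A) (u : G) : List (G × A) :=
  F.attach.toList.map fun p : F => (p + u, q p)

theorem occursIn_window_iff [Add G] {F : Finset G} {q : F → A} {u : G} {x : G → A} :
    OccursIn (window q u) x ↔ (fun p : F => x (p + u)) = q := by
  simp only [OccursIn, window, List.forall_mem_map, Finset.mem_toList, Finset.mem_attach,
    true_imp_iff, funext_iff]

/-- The forbidden patterns at `v` of the shift of finite type with shape `F` and syntax `L`: all
translates of some `q ∉ L` whose domain contains `v`, and also those based at `v`, which are the
only ones when `F` is empty. -/
noncomputable def forbidden [AddGroup G] [Finite A] (F : Finset G) (L : Set (F → A)) (v : G) :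
    List (List (G × A)) :=
  (0 :: F.toList).flatMap fun f => (Set.toFinite Lᶜ).toFinset.toList.map fun q => window q (-f + v)

variable [AddGroup G] [Finite A] {F : Finset G} {L : Set (F → A)}

theorem mem_forbidden {v : G} {l : List (G × A)} :
    l ∈ forbidden F L v ↔ ∃ f, (f = 0 ∨ f ∈ F) ∧ ∃ q ∉ L, window q (-f + v) = l := by
  simp only [forbidden, List.mem_flatMap, List.mem_cons, Finset.mem_toList, List.mem_map,
    Set.Finite.mem_toFinset, Set.mem_compl_iff]

theorem solutions_forbidden :
    solutions (forbidden F L) = {x | ∀ u, (fun v : F => x (v + u)) ∈ L} := by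
  ext x
  constructor
  · intro hx u
    by_contra hu
    exact hx u _ (mem_forbidden.2 ⟨0, .inl rfl, _, hu, rfl⟩)
      (occursIn_window_iff.2 (by simp only [neg_zero, zero_add]))
  · intro hx v l hl hlx
    obtain ⟨f, -, q, hq, rfl⟩ := mem_forbidden.1 hl
    exact hq (occursIn_window_iff.1 hlx ▸ hx _)

theorem isSaturated_forbidden : IsSaturated (forbidden F L) := by
  intro u l hl p hp
  obtain ⟨f, -, q, hq, rfl⟩ := mem_forbidden.1 hl
  obtain ⟨g, -, rfl⟩ := List.mem_map.1 hp
  exact mem_forbidden.2 ⟨g, .inr g.2, q, hq, by simp only [neg_add_cancel_left]⟩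

theorem primrec_forbidden [Primcodable G] [Primcodable A]
    (hadd : Primrec₂ ((· + ·) : G → G → G)) : Primrec (forbidden F L) := by
  have htranslate (p f : G) : Primrec fun v => p + (-f + v) :=
    hadd.comp (Primrec.const p) (hadd.comp (Primrec.const (-f)) Primrec.id)
  refine Primrec.list_flatten.comp <| primrec_list_map_of_forall _ fun f =>
    primrec_list_map_of_forall _ fun q => primrec_list_map_of_forall _ fun p => ?_
  exact (htranslate p f).pair (Primrec.const (q p))

theorem globally_admissible_decidable_general [Primcodable G] [Primcodable A]
    (hadd : Primrec₂ ((· + ·) : G → G → G)) {X : Set (G → A)}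
    (hX : X = {x | ∀ u, (fun v : F => x (v + u)) ∈ L}) (hne : X.Nonempty)
    (hglue : HasFiniteGluing X) :
    ∃ f : List (G × A) → Bool, Computable f ∧
      ∀ l, f l = true ↔ ∃ x ∈ X, ∀ p ∈ l, x p.1 = p.2 := by
  rw [← solutions_forbidden] at hX
  subst hX
  have : Nonempty A := ⟨hne.some 0⟩
  obtain ⟨f, hf, hfl⟩ := ComputablePred.computable_iff.1 <|
    computablePred_occursIn_solutions (primrec_forbidden hadd) isSaturated_forbidden hne hglue
  exact ⟨f, hf, fun l => (Iff.of_eq (congrFun hfl l)).symm⟩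

end ShiftOfFiniteType

theorem IrreducibleShift.hasFiniteGluing {d : ℕ} {A : Type} {X : Set ((Fin d → ℤ) → A)}
    (h : IrreducibleShift X) : HasFiniteGluing X := by
  obtain ⟨r, -, hr⟩ := h
  rintro l ⟨x, hx, hxl⟩
  let near (u : Fin d → ℤ) : Finset (Fin d → ℤ) :=
    Fintype.piFinset fun i => Finset.Ioo (u i - r) (u i + r)
  have hfar {u v : Fin d → ℤ} (hv : v ∉ near u) : ∃ i, (r : ℤ) ≤ |u i - v i| := by
    simp only [near, Fintype.mem_piFinset, Finset.mem_Ioo, not_forall] at hv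
    obtain ⟨i, hi⟩ := hv
    exact ⟨i, by grind⟩
  classical
  let S := (sites [l]).toFinset.biUnion near
  refine ⟨S, fun z hz => ?_⟩
  obtain ⟨y, hy, hyx, hyz⟩ := hr {v | v ∈ sites [l]} {v | v ∉ S} x z
    (fun u hu v hv => hfar fun hvu => hv (Finset.mem_biUnion.2 ⟨u, List.mem_toFinset.2 hu, hvu⟩))
    ⟨x, hx, fun _ _ => rfl⟩ ⟨z, hz, fun _ _ => rfl⟩
  refine ⟨y, hy, ?_, hyz⟩
  rw [dependsOn_occursIn_of_mem List.mem_cons_self hyx]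
  exact hxl

/-- For a nonempty irreducible SFT, global admissibility of finite patterns is decidable.
A finite pattern `(E, a)` is effectively coded by the list of pairs `(v, a v)`, `v ∈ E`
(its graph); the computable function `f` decides, given such a code, whether some point
of `X` agrees with it. -/
theorem globally_admissible_decidable (d : ℕ) (hd : 1 ≤ d) (A : Type) [Fintype A]
    [Primcodable A] (X : Set ((Fin d → ℤ) → A)) (hSFT : IsSFT X) (hne : X.Nonempty)
    (hirr : IrreducibleShift X) :
    ∃ f : List ((Fin d → ℤ) × A) → Bool, Computable f ∧
      ∀ l : List ((Fin d → ℤ) × A),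
        f l = true ↔ ∃ x ∈ X, ∀ p ∈ l, x p.1 = p.2 :=
  have ⟨_, _, hX⟩ := hSFT
  globally_admissible_decidable_general (primrec₂_fin_pi_add primrec₂_int_add) hX hne
    hirr.hasFiniteGluing
end

section
/- Define finite sets I_n ⊆ ℕ by I_1 = {1,2,4,5} and I_{n+1} = I_n ∪ (I_n + 5^n) ∪ (I_n + 3·5^n) ∪ (I_n + 4·5^n). Then for every n ≥ 1 there exists a finite set S ⊆ I_{2^{3n}+1} which is a complete set of residues modulo 2^n, i.e. for every integer j with 0 ≤ j < 2^n there is exactly one s ∈ S with s ≡ j (mod 2^n). -/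
/-- The sets `I_n ⊆ ℕ`, defined by `I_1 = {1,2,4,5}` and
`I_{n+1} = I_n ∪ (I_n + 5^n) ∪ (I_n + 3·5^n) ∪ (I_n + 4·5^n)`  (`I_0` is irrelevant). -/
def Iset : ℕ → Finset ℕ
  | 0 => ∅
  | 1 => {1, 2, 4, 5}
  | n + 2 =>
      Iset (n + 1) ∪ (Iset (n + 1)).image (· + 5 ^ (n + 1)) ∪
        (Iset (n + 1)).image (· + 3 * 5 ^ (n + 1)) ∪
        (Iset (n + 1)).image (· + 4 * 5 ^ (n + 1))

/-!
If `5 ^ t ≡ 1` modulo `N`, the geometric sums `1 + 5 ^ t + ⋯ + 5 ^ (t * (k - 1))` are congruent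
to `k`, so those with `1 ≤ k ≤ N` represent every residue exactly once. Each further term is the
shift by `5 ^ m` allowed in passing from `I_m` to `I_{m+1}`, so the sum with `k` terms lies in
`I_{t(k-1)+1}`. By Euler's theorem `t = φ(N)` works whenever `N` is coprime to `5`.
-/

lemma Iset_succ_of_pos {m : ℕ} (hm : 0 < m) :
    Iset (m + 1) = Iset m ∪ (Iset m).image (· + 5 ^ m) ∪ (Iset m).image (· + 3 * 5 ^ m) ∪
      (Iset m).image (· + 4 * 5 ^ m) := by
  obtain ⟨k, rfl⟩ := Nat.exists_eq_add_one.mpr hm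
  rfl

lemma Iset_monotone : Monotone Iset := by
  refine monotone_nat_of_le_succ fun m ↦ ?_
  rcases m.eq_zero_or_pos with rfl | hm
  · exact Finset.empty_subset _
  · intro s hs
    simp only [Iset_succ_of_pos hm, Finset.mem_union, hs, true_or]

lemma add_five_pow_mem_Iset {m s : ℕ} (hm : 0 < m) (hs : s ∈ Iset m) :
    s + 5 ^ m ∈ Iset (m + 1) := by
  simp only [Iset_succ_of_pos hm, Finset.mem_union]
  exact .inl (.inl (.inr (Finset.mem_image_of_mem _ hs)))

lemma geom_sum_mem_Iset {t : ℕ} (ht : 0 < t) (k : ℕ) :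
    ∑ i ∈ Finset.range (k + 1), (5 ^ t) ^ i ∈ Iset (t * k + 1) := by
  induction k with
  | zero => simp [Iset]
  | succ k ih =>
    have hle : t * k + 1 ≤ t * (k + 1) := by
      rw [mul_add_one]
      exact Nat.add_le_add_left ht _
    rw [Finset.sum_range_succ, ← pow_mul]
    exact add_five_pow_mem_Iset (Nat.mul_pos ht k.succ_pos) (Iset_monotone hle ih)

lemma geom_sum_modEq_of_modEq_one {b N : ℕ} (hb : b ≡ 1 [MOD N]) (k : ℕ) :
    ∑ i ∈ Finset.range k, b ^ i ≡ k [MOD N] := by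
  induction k with
  | zero => rfl
  | succ k ih =>
    rw [Finset.sum_range_succ]
    simpa only [one_pow] using ih.add (hb.pow k)

lemma existsUnique_mem_image_Ico_mod_eq {f : ℕ → ℕ} {N j : ℕ} (hf : ∀ k, f k ≡ k [MOD N])
    (a : ℕ) (hj : j < N) : ∃! s, s ∈ (Finset.Ico a (a + N)).image f ∧ s % N = j := by
  have hj' : j ∈ (Finset.Ico a (a + N)).image (· % N) := by
    rwa [Nat.image_Ico_mod, Finset.mem_range]
  obtain ⟨k, hk, rfl⟩ := Finset.mem_image.mp hj'
  refine ⟨f k, ⟨Finset.mem_image_of_mem f hk, hf k⟩, ?_⟩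
  rintro _ ⟨hs, hsk⟩
  obtain ⟨l, hl, rfl⟩ := Finset.mem_image.mp hs
  have hlk : l ≡ k [MOD N] := (hf l).symm.trans hsk
  exact congrArg f (Nat.mod_injOn_Ico a N hl hk hlk)

theorem Iset_contains_complete_residues_general {N : ℕ} (hN : N.Coprime 5) :
    ∃ S : Finset ℕ, S ⊆ Iset (N.totient * (N - 1) + 1) ∧
      ∀ j : ℕ, j < N → ∃! s : ℕ, s ∈ S ∧ s % N = j := by
  have hN0 : 0 < N := Nat.pos_of_ne_zero (by rintro rfl; norm_num at hN)
  have h5 : 5 ^ N.totient ≡ 1 [MOD N] := Nat.ModEq.pow_totient hN.symm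
  refine ⟨(Finset.Ico 1 (1 + N)).image fun k ↦ ∑ i ∈ Finset.range k, (5 ^ N.totient) ^ i, ?_,
    fun j hj ↦ existsUnique_mem_image_Ico_mod_eq (geom_sum_modEq_of_modEq_one h5) 1 hj⟩
  refine Finset.image_subset_iff.mpr fun k hk ↦ ?_
  obtain ⟨hk1, hkN⟩ := Finset.mem_Ico.mp hk
  obtain ⟨k, rfl⟩ := Nat.exists_eq_add_one.mpr hk1
  have hle : k ≤ N - 1 := by lia
  exact Iset_monotone (by gcongr) (geom_sum_mem_Iset (Nat.totient_pos.mpr hN0) k)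

lemma totient_two_pow_mul_le (n : ℕ) : (2 ^ n).totient * (2 ^ n - 1) ≤ 2 ^ (3 * n) :=
  calc (2 ^ n).totient * (2 ^ n - 1)
      ≤ 2 ^ n * 2 ^ n := Nat.mul_le_mul (Nat.totient_le _) (Nat.sub_le _ _)
    _ = 2 ^ (n + n) := (pow_add 2 n n).symm
    _ ≤ 2 ^ (3 * n) := Nat.pow_le_pow_right two_pos (by lia)

/-- For every `n ≥ 1` there is a subset of `I_{2^{3n}+1}` which is a complete set of
residues modulo `2^n`. -/
theorem Iset_contains_complete_residues (n : ℕ) (hn : 1 ≤ n) :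
    ∃ S : Finset ℕ, S ⊆ Iset (2 ^ (3 * n) + 1) ∧
      ∀ j : ℕ, j < 2 ^ n → ∃! s : ℕ, s ∈ S ∧ s % 2 ^ n = j := by
  obtain ⟨S, hS, hres⟩ := Iset_contains_complete_residues_general
    (Nat.Coprime.pow_left n (by norm_num : Nat.Coprime 2 5))
  exact ⟨S, hS.trans (Iset_monotone (Nat.succ_le_succ (totient_two_pow_mul_le n))), hres⟩
end

section
/- Let (a_n)_{n≥1} be integers such that the sets U_n = a_n + 2^nℤ are pairwise disjoint, let ρ_n ∈ {0,1} for each n ≥ 1, and let c : ℤ → {0,1} be any function satisfying c(u) = ρ_n for all u ∈ U_n and all n ≥ 1. Let N ≥ 1 and let S ⊆ ℤ be a complete set of residues modulo 2^N. Then |(1/2^N) · #{s ∈ S : c(s) = 1} − Σ_{n=1}^{∞} ρ_n 2^{−n}| ≤ 2^{−N}. -/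
/-!
If `d i ∣ m`, the coset `a i + d i ℤ` has exactly `m / d i` members in a complete residue system
`S` modulo `m`. Summing over finitely many disjoint cosets bounds the average of `c` over `S` below
by the partial sum `∑ ρ i / d i`. The complementary colouring `1 - c` obeys the same bound, so the
average lies in an interval of length `1 - ∑ 1 / d i`. When the `1 / d i` over all indices add up to
at most `1`, the full series lies in the same interval.
-/

open Finset

/-- A finite set of integers with exactly one member in each residue class modulo `m > 0`. The
classes are indexed by their least nonnegative representatives, and for `m ≤ 0` the condition is
void. -/
def IsCompleteResidueSystem (m : ℤ) (S : Finset ℤ) : Prop :=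
  ∀ j : ℤ, 0 ≤ j → j < m → ∃! s : ℤ, s ∈ S ∧ m ∣ s - j

namespace IsCompleteResidueSystem

variable {m : ℤ} {S : Finset ℤ}

theorem bijOn_emod (hS : IsCompleteResidueSystem m S) (hm : 0 < m) :
    Set.BijOn (· % m) (S : Set ℤ) (Set.Ico 0 m) := by
  have emod_mem (s : ℤ) : s % m ∈ Set.Ico 0 m :=
    ⟨Int.emod_nonneg s hm.ne', Int.emod_lt_of_pos s hm⟩
  refine ⟨fun s _ => emod_mem s, fun s hs t ht hst => ?_, fun j hj => ?_⟩
  · have hst : s % m = t % m := hst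
    refine (hS (s % m) (emod_mem s).1 (emod_mem s).2).unique ⟨hs, Int.dvd_self_sub_emod⟩ ⟨ht, ?_⟩
    exact hst ▸ Int.dvd_self_sub_emod
  · obtain ⟨s, ⟨hs, hsj⟩, -⟩ := hS j hj.1 hj.2
    exact ⟨s, hs, (Int.modEq_iff_dvd.2 hsj).eq.symm.trans (Int.emod_eq_of_lt hj.1 hj.2)⟩

theorem card_filter_dvd_sub_eq_card_Ico (hS : IsCompleteResidueSystem m S) (hm : 0 < m) {d : ℤ}
    (hdm : d ∣ m) (b : ℤ) : #{s ∈ S | d ∣ s - b} = #{x ∈ Ico 0 m | x ≡ b [ZMOD d]} := by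
  have hbij := hS.bijOn_emod hm
  have emod_modEq (s : ℤ) : s % m ≡ b [ZMOD d] ↔ d ∣ s - b := by
    rw [Int.modEq_comm, Int.ModEq, Int.emod_emod_of_dvd s hdm]
    exact Int.modEq_iff_dvd
  refine card_nbij (· % m) (fun s hs => ?_)
    (hbij.injOn.mono (coe_subset.2 (filter_subset _ S))) fun x hx => ?_
  · obtain ⟨hsS, hsb⟩ := mem_filter.1 hs
    exact mem_filter.2 ⟨mem_Ico.2 (hbij.mapsTo hsS), (emod_modEq s).2 hsb⟩
  · obtain ⟨hx_mem, hxb⟩ := mem_filter.1 hx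
    obtain ⟨s, hsS, rfl⟩ := hbij.surjOn (mem_Ico.1 hx_mem)
    exact ⟨s, mem_filter.2 ⟨hsS, (emod_modEq s).1 hxb⟩, rfl⟩

theorem card_filter_dvd_sub_mul (hS : IsCompleteResidueSystem m S) (hm : 0 < m) {d : ℤ}
    (hd : 0 < d) (hdm : d ∣ m) (b : ℤ) : (#{s ∈ S | d ∣ s - b} : ℤ) * d = m := by
  obtain ⟨e, rfl⟩ := hdm
  have he : 0 < e := pos_of_mul_pos_right hm hd.le
  have hshift : (((d * e : ℤ) : ℚ) - b) / d = ((0 : ℤ) - b) / d + e := by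
    push_cast
    field_simp
    ring
  rw [hS.card_filter_dvd_sub_eq_card_Ico hm ⟨e, rfl⟩, Int.Ico_filter_modEq_card _ _ hd, hshift,
    Int.ceil_add_intCast, add_sub_cancel_left, max_eq_left he.le, mul_comm]

theorem card_eq (hS : IsCompleteResidueSystem m S) (hm : 0 < m) : (#S : ℤ) = m := by
  simpa using hS.card_filter_dvd_sub_mul hm one_pos (one_dvd m) 0

variable {ι : Type*} {I : Finset ι} {a d : ι → ℤ}

theorem sum_div_le_average (hS : IsCompleteResidueSystem m S) (hm : 0 < m)
    (hd : ∀ i ∈ I, 0 < d i) (hdm : ∀ i ∈ I, d i ∣ m)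
    (hdisj : (I : Set ι).Pairwise fun i j => ∀ t, ¬(d i ∣ t - a i ∧ d j ∣ t - a j))
    {ρ : ι → ℝ} {c : ℤ → ℝ} (hc0 : ∀ t, 0 ≤ c t) (hc : ∀ i ∈ I, ∀ t, d i ∣ t - a i → ρ i ≤ c t) :
    ∑ i ∈ I, ρ i / d i ≤ (∑ s ∈ S, c s) / m := by
  classical
  let U (i : ι) : Finset ℤ := {s ∈ S | d i ∣ s - a i}
  have hU_disj : (I : Set ι).PairwiseDisjoint U := fun i hi j hj hij =>
    disjoint_filter.2 fun t _ hti htj => hdisj hi hj hij t ⟨hti, htj⟩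
  have hU_card (i : ι) (hi : i ∈ I) : ρ i / d i * m = #(U i) * ρ i := by
    have hcard : (#(U i) : ℝ) * d i = m :=
      mod_cast hS.card_filter_dvd_sub_mul hm (hd i hi) (hdm i hi) (a i)
    have hdi : (d i : ℝ) ≠ 0 := mod_cast (hd i hi).ne'
    rw [← hcard]
    field_simp
  rw [le_div_iff₀ (mod_cast hm)]
  calc (∑ i ∈ I, ρ i / d i) * m
      = ∑ i ∈ I, #(U i) * ρ i := by rw [sum_mul, sum_congr rfl hU_card]
    _ = ∑ i ∈ I, ∑ _s ∈ U i, ρ i := by simp only [sum_const, nsmul_eq_mul]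
    _ ≤ ∑ i ∈ I, ∑ s ∈ U i, c s := sum_le_sum fun i hi => sum_le_sum fun s hs =>
        hc i hi s (mem_filter.1 hs).2
    _ = ∑ s ∈ I.biUnion U, c s := (sum_biUnion hU_disj).symm
    _ ≤ ∑ s ∈ S, c s := sum_le_sum_of_subset_of_nonneg
        (biUnion_subset.2 fun i _ => filter_subset _ _) fun s _ _ => hc0 s

theorem average_one_sub (hS : IsCompleteResidueSystem m S) (hm : 0 < m) (c : ℤ → ℝ) :
    (∑ s ∈ S, (1 - c s)) / m = 1 - (∑ s ∈ S, c s) / m := by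
  have hcard : (#S : ℝ) = m := mod_cast hS.card_eq hm
  have hm0 : (m : ℝ) ≠ 0 := mod_cast hm.ne'
  rw [sum_sub_distrib, sum_const, nsmul_one, hcard, sub_div, div_self hm0]

end IsCompleteResidueSystem

theorem hasSum_inv_two_pow_succ : HasSum (fun n : ℕ => ((2 : ℝ) ^ (n + 1))⁻¹) 1 := by
  simpa only [pow_succ', mul_inv, div_eq_mul_inv, one_mul] using hasSum_geometric_two' 1

theorem sum_range_inv_two_pow_succ (N : ℕ) :
    ∑ n ∈ range N, ((2 : ℝ) ^ (n + 1))⁻¹ = 1 - ((2 : ℝ) ^ N)⁻¹ := by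
  induction N with
  | zero => simp
  | succ N ih =>
    rw [sum_range_succ, ih, pow_succ]
    ring

theorem freq_on_complete_residues_close_to_density_general {ι : Type*} {m : ℤ} {S : Finset ℤ}
    (hS : IsCompleteResidueSystem m S) (hm : 0 < m) {a d : ι → ℤ} (hd : ∀ i, 0 < d i)
    (hsum : Summable fun i => (1 : ℝ) / d i) (hsum_le : ∑' i, (1 : ℝ) / d i ≤ 1)
    {I : Finset ι} (hdm : ∀ i ∈ I, d i ∣ m)
    (hdisj : (I : Set ι).Pairwise fun i j => ∀ t, ¬(d i ∣ t - a i ∧ d j ∣ t - a j))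
    {ρ : ι → ℝ} (hρ : ∀ i, ρ i ∈ Set.Icc 0 1) {c : ℤ → ℝ} (hc01 : ∀ t, c t ∈ Set.Icc 0 1)
    (hc : ∀ i ∈ I, ∀ t, d i ∣ t - a i → c t = ρ i) :
    |(∑ s ∈ S, c s) / m - ∑' i, ρ i / d i| ≤ 1 - ∑ i ∈ I, (1 : ℝ) / d i := by
  have hdI : ∀ i ∈ I, 0 < d i := fun i _ => hd i
  have hd0 (i : ι) : (0 : ℝ) ≤ d i := mod_cast (hd i).le
  have hρ_sum : Summable fun i => ρ i / d i := hsum.of_nonneg_of_le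
    (fun i => div_nonneg (hρ i).1 (hd0 i)) fun i => div_le_div_of_nonneg_right (hρ i).2 (hd0 i)
  have hcompl_sum : Summable fun i => (1 - ρ i) / d i := by
    simpa only [sub_div] using hsum.sub hρ_sum
  have hcompl_tsum : ∑' i, (1 - ρ i) / d i = ∑' i, (1 : ℝ) / d i - ∑' i, ρ i / d i := by
    simp only [sub_div, hsum.tsum_sub hρ_sum]
  have hpartial : ∑ i ∈ I, ρ i / d i + ∑ i ∈ I, (1 - ρ i) / d i = ∑ i ∈ I, (1 : ℝ) / d i := by
    simp only [← sum_add_distrib, ← add_div, add_sub_cancel]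
  have havg_lower : ∑ i ∈ I, ρ i / d i ≤ (∑ s ∈ S, c s) / m :=
    hS.sum_div_le_average hm hdI hdm hdisj (fun t => (hc01 t).1) fun i hi t ht => (hc i hi t ht).ge
  have havg_upper : ∑ i ∈ I, (1 - ρ i) / d i ≤ 1 - (∑ s ∈ S, c s) / m :=
    hS.average_one_sub hm c ▸ hS.sum_div_le_average hm hdI hdm hdisj
      (fun t => sub_nonneg.2 (hc01 t).2) fun i hi t ht => by rw [hc i hi t ht]
  have htsum_lower : ∑ i ∈ I, ρ i / d i ≤ ∑' i, ρ i / d i :=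
    hρ_sum.sum_le_tsum I fun i _ => div_nonneg (hρ i).1 (hd0 i)
  have htsum_upper : ∑ i ∈ I, (1 - ρ i) / d i ≤ ∑' i, (1 - ρ i) / d i :=
    hcompl_sum.sum_le_tsum I fun i _ => div_nonneg (sub_nonneg.2 (hρ i).2) (hd0 i)
  rw [abs_le]
  constructor <;> linarith

/-- Let `U_n = a_n + 2^nℤ` (`n ≥ 1`) be pairwise disjoint cosets, let `ρ_n ∈ {0,1}`, and
let `c : ℤ → {0,1}` equal `ρ_n` on `U_n`.  If `S` is a complete set of residues modulo
`2^N` (`N ≥ 1`), then the relative frequency of `1`s of `c` on `S` differs from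
`Σ_{n≥1} ρ_n 2^{-n}` by at most `2^{-N}`.  (Here the index `n : ℕ` stands for the level
`n+1`, so the modulus of the `n`-th coset is `2^{n+1}` and the series is
`Σ_n ρ_{n+1} 2^{-(n+1)}`; the symbols `1`/`0` are rendered as `true`/`false`.) -/
theorem freq_on_complete_residues_close_to_density (a : ℕ → ℤ) (ρ : ℕ → Bool) (c : ℤ → Bool)
    (hdisj : ∀ m n : ℕ, m ≠ n → ∀ t : ℤ,
      ¬((2 : ℤ) ^ (m + 1) ∣ t - a m ∧ (2 : ℤ) ^ (n + 1) ∣ t - a n))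
    (hc : ∀ (n : ℕ) (t : ℤ), (2 : ℤ) ^ (n + 1) ∣ t - a n → c t = ρ n)
    (N : ℕ) (hN : 1 ≤ N) (S : Finset ℤ)
    (hS : ∀ j : ℤ, 0 ≤ j → j < 2 ^ N → ∃! s : ℤ, s ∈ S ∧ (2 : ℤ) ^ N ∣ s - j) :
    |((S.filter fun s => c s = true).card : ℝ) / 2 ^ N -
        ∑' n : ℕ, (if ρ n = true then ((2 : ℝ) ^ (n + 1))⁻¹ else 0)| ≤ ((2 : ℝ) ^ N)⁻¹ := by
  have hN0 : (0 : ℤ) < 2 ^ N := by positivity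
  have hbound := freq_on_complete_residues_close_to_density_general (I := range N)
    (ρ := fun n => if ρ n = true then 1 else 0) (c := fun t => if c t = true then 1 else 0)
    (d := fun n => 2 ^ (n + 1)) (a := a)
    hS hN0 (fun n => by positivity) (by simpa using hasSum_inv_two_pow_succ.summable)
    (by simpa using hasSum_inv_two_pow_succ.tsum_eq.le)
    (fun n hn => pow_dvd_pow 2 (mem_range.1 hn)) (fun m _ n _ hmn => hdisj m n hmn)
    (fun n => by split_ifs <;> simp) (fun t => by split_ifs <;> simp)
    (fun n _ t ht => by rw [hc n t ht])
  simpa [ite_div, sum_range_inv_two_pow_succ] using hbound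
end
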